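/- The PTM representation of the two-fold tensor product of the single-qubit Clifford group on two qubits decomposes into exactly four inequivalent irreducible subrepresentations, indexed by w ∈ {0,1}², with projectors P_w = Σ |σ₁⊗σ₂⟩⟩⟨⟨σ₁⊗σ₂| where σ_i ranges over nontrivial normalized single-qubit Paulis if w_i = 1 and equals the normalized identity if w_i = 0. -/

import Mathlib

/-!
The commutant of `ψ (g, h) = φ₁ g ⊗ φ₂ h` is determined slice by slice: `X` commutes with every
`φ₁ g ⊗ 1` and every `1 ⊗ φ₂ h` iff all of its slices lie in the commutants of `φ₁` and `φ₂`.
The character norm `2` makes the commutant of each `φᵢ` two-dimensional, and it already contains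
the diagonal matrices that are constant on the trivial and on the nontrivial labels. Hence the
commutant of `ψ` is the algebra of diagonal matrices constant on the four sectors. A proper
invariant subspace of a sector would give, by Maschke's theorem, a non-scalar element of this
algebra on that sector, and an equivalence between two sectors would give a non-diagonal one.
-/

open Matrix
open scoped Kronecker

/-- The projector `P_w`, for `w ∈ {0,1}²`, onto the span of the (vectorized) normalized
two-qubit Pauli matrices `σ₁ ⊗ σ₂` where `σᵢ` is a nontrivial Pauli iff `wᵢ = 1`.
Pauli labels are indexed by `Fin 4`, with `0` labelling the normalized identity `σ₀`. -/
noncomputable def pauliWeightProj (w : Bool × Bool) :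
    Matrix (Fin 4 × Fin 4) (Fin 4 × Fin 4) ℝ :=
  Matrix.diagonal fun st =>
    if ((st.1 ≠ 0) ↔ w.1 = true) ∧ ((st.2 ≠ 0) ↔ w.2 = true) then 1 else 0

section BlockScalar

variable {R m n ι κ : Type*} [CommSemiring R] [Fintype m] [DecidableEq m] [Fintype n]
  [DecidableEq n]

variable (R) in
/-- The algebra of diagonal matrices whose entries depend only on the label `l i` of the index
`i`, parametrized by the scalars attached to the labels. -/
def blockScalar (l : n → ι) : (ι → R) →ₐ[R] Matrix n n R :=
  (diagonalAlgHom R).comp (AlgHom.pi fun i => Pi.evalAlgHom R _ (l i))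

lemma blockScalar_apply (l : n → ι) (c : ι → R) : blockScalar R l c = diagonal (c ∘ l) := rfl

lemma blockScalar_injective {l : n → ι} (hl : l.Surjective) :
    Function.Injective (blockScalar R l) :=
  diagonal_injective.comp hl.injective_comp_right

lemma mem_range_blockScalar {l : n → ι} {X : Matrix n n R} :
    X ∈ (blockScalar R l).range ↔ X.IsDiag ∧ X.diag.FactorsThrough l := by
  rw [Function.factorsThrough_iff, AlgHom.mem_range]
  constructor
  · rintro ⟨c, rfl⟩
    exact ⟨isDiag_diagonal _, c, diag_diagonal _⟩
  · rintro ⟨hX, c, hc⟩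
    exact ⟨c, by rw [blockScalar_apply, ← hc, hX.diagonal_diag]⟩

lemma mem_range_blockScalar_prodMap {l : m → ι} {l' : n → κ} {X : Matrix (m × n) (m × n) R} :
    X ∈ (blockScalar R (Prod.map l l')).range ↔
      (∀ b d, X.submatrix (·, b) (·, d) ∈ (blockScalar R l).range) ∧
        ∀ a c, X.submatrix (a, ·) (c, ·) ∈ (blockScalar R l').range := by
  simp only [mem_range_blockScalar]
  constructor
  · rintro ⟨hdiag, hconst⟩
    refine ⟨fun b d => ⟨fun a c hac => hdiag (by simp [hac]), fun a c hac => ?_⟩,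
      fun a c => ⟨fun b d hbd => hdiag (by simp [hbd]), fun b d hbd => ?_⟩⟩
    · obtain rfl | hbd := eq_or_ne b d
      · exact hconst (Prod.ext hac rfl)
      · exact (hdiag (by simp [hbd])).trans (hdiag (by simp [hbd])).symm
    · obtain rfl | hac := eq_or_ne a c
      · exact hconst (Prod.ext rfl hbd)
      · exact (hdiag (by simp [hac])).trans (hdiag (by simp [hac])).symm
  · rintro ⟨hleft, hright⟩
    refine ⟨fun ⟨a, b⟩ ⟨c, d⟩ hne => ?_, fun ⟨a, b⟩ ⟨c, d⟩ hlabel => ?_⟩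
    · obtain rfl | hac := eq_or_ne a c
      · exact (hright a a).1 (by simpa using hne)
      · exact (hleft b d).1 hac
    · obtain ⟨hac, hbd⟩ := Prod.ext_iff.1 hlabel
      calc X (a, b) (a, b) = X (c, b) (c, b) := (hleft b b).2 hac
        _ = X (c, d) (c, d) := (hright c c).2 hbd

variable [DecidableEq ι]

variable (R) in
/-- The projector onto the coordinates labelled `w`. -/
def sectorProj (l : n → ι) (w : ι) : Matrix n n R :=
  blockScalar R l (Pi.single w 1)

lemma completeOrthogonalIdempotents_sectorProj [Fintype ι] (l : n → ι) :
    CompleteOrthogonalIdempotents (sectorProj R l) :=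
  (CompleteOrthogonalIdempotents.single fun _ : ι => R).map (blockScalar R l).toRingHom

lemma isSymm_sectorProj (l : n → ι) (w : ι) : (sectorProj R l w).IsSymm :=
  isSymm_diagonal _

lemma sectorProj_ne_zero [Nontrivial R] {l : n → ι} (hl : l.Surjective) (w : ι) :
    sectorProj R l w ≠ 0 :=
  (map_ne_zero_iff _ (blockScalar_injective hl)).2 (by simp)

lemma blockScalar_mulVec (l : n → ι) (c : ι → R) {w : ι} {x : n → R}
    (hx : x ∈ LinearMap.range (sectorProj R l w).mulVecLin) :
    blockScalar R l c *ᵥ x = c w • x := by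
  have hmul : blockScalar R l c * sectorProj R l w = c w • sectorProj R l w := by
    rw [sectorProj, ← map_mul, ← map_smul]
    congr 1
    ext i
    obtain rfl | hi := eq_or_ne i w <;> simp [*]
  obtain ⟨y, rfl⟩ := hx
  rw [mulVecLin_apply, mulVec_mulVec, hmul, smul_mulVec]

lemma sectorProj_mulVec_of_mem (l : n → ι) {w : ι} {x : n → R}
    (hx : x ∈ LinearMap.range (sectorProj R l w).mulVecLin) : sectorProj R l w *ᵥ x = x :=
  (blockScalar_mulVec l (Pi.single w 1) hx).trans (by simp)

lemma sectorProj_mulVec_of_mem_of_ne (l : n → ι) {w w' : ι} (hw : w ≠ w') {x : n → R}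
    (hx : x ∈ LinearMap.range (sectorProj R l w).mulVecLin) : sectorProj R l w' *ᵥ x = 0 :=
  (blockScalar_mulVec l (Pi.single w' 1) hx).trans (by simp [hw])

end BlockScalar

section Commutant

variable {R G H m n ι κ : Type*} [CommSemiring R] [Monoid G] [Monoid H] [Fintype m]
  [DecidableEq m] [Fintype n] [DecidableEq n]

/-- The algebra of matrices commuting with a matrix representation. -/
def commutant (φ : G →* Matrix n n R) : Subalgebra R (Matrix n n R) :=
  Subalgebra.centralizer R (Set.range φ)

lemma mem_commutant {φ : G →* Matrix n n R} {X : Matrix n n R} :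
    X ∈ commutant φ ↔ ∀ g, φ g * X = X * φ g := by
  simp [commutant, Subalgebra.mem_centralizer_iff]

lemma range_blockScalar_le_commutant {φ : G →* Matrix n n R} {l : n → ι}
    (hφ : ∀ g i j, l i ≠ l j → φ g i j = 0) : (blockScalar R l).range ≤ commutant φ := by
  rintro _ ⟨c, rfl⟩
  refine mem_commutant.2 fun g => Matrix.ext fun i j => ?_
  change (φ g * diagonal (c ∘ l)) i j = (diagonal (c ∘ l) * φ g) i j
  rw [mul_diagonal, diagonal_mul, mul_comm, Function.comp_apply, Function.comp_apply]
  by_cases hij : l i = l j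
  · rw [hij]
  · rw [hφ g i j hij, mul_zero, mul_zero]

/-- The outer tensor product `(g, h) ↦ φ g ⊗ ψ h` of two matrix representations. -/
def kroneckerHom (φ : G →* Matrix m m R) (ψ : H →* Matrix n n R) :
    G × H →* Matrix (m × n) (m × n) R where
  toFun p := φ p.1 ⊗ₖ ψ p.2
  map_one' := by simp
  map_mul' p q := by simp [mul_kronecker_mul]

omit [DecidableEq m] in
lemma kronecker_one_mul_eq_iff {M : Matrix m m R} {X : Matrix (m × n) (m × n) R} :
    (M ⊗ₖ (1 : Matrix n n R)) * X = X * (M ⊗ₖ (1 : Matrix n n R)) ↔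
      ∀ b d, M * X.submatrix (·, b) (·, d) = X.submatrix (·, b) (·, d) * M := by
  simp only [← Matrix.ext_iff, Prod.forall, mul_apply, Fintype.sum_prod_type, kronecker_apply,
    one_apply, submatrix_apply]
  simp only [mul_ite, mul_one, mul_zero, ite_mul, zero_mul, Finset.sum_ite_eq, Finset.mem_univ,
    ↓reduceIte, Finset.sum_ite_eq']
  exact ⟨fun h b d i j => h i b j d, fun h a b c d => h b d a c⟩

omit [DecidableEq n] in
lemma one_kronecker_mul_eq_iff {N : Matrix n n R} {X : Matrix (m × n) (m × n) R} :
    ((1 : Matrix m m R) ⊗ₖ N) * X = X * ((1 : Matrix m m R) ⊗ₖ N) ↔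
      ∀ a c, N * X.submatrix (a, ·) (c, ·) = X.submatrix (a, ·) (c, ·) * N := by
  simp only [← Matrix.ext_iff, Prod.forall, mul_apply, Fintype.sum_prod_type, kronecker_apply,
    one_apply, submatrix_apply]
  simp only [ite_mul, one_mul, zero_mul, Finset.sum_ite_irrel, Finset.sum_const_zero,
    Finset.sum_ite_eq, Finset.mem_univ, ↓reduceIte, mul_ite, mul_zero, Finset.sum_ite_eq']
  exact ⟨fun h a c i j => h a i c j, fun h a b c d => h a c b d⟩

lemma mem_commutant_kroneckerHom {φ : G →* Matrix m m R} {ψ : H →* Matrix n n R}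
    {X : Matrix (m × n) (m × n) R} :
    X ∈ commutant (kroneckerHom φ ψ) ↔
      (∀ b d, X.submatrix (·, b) (·, d) ∈ commutant φ) ∧
        ∀ a c, X.submatrix (a, ·) (c, ·) ∈ commutant ψ := by
  have hfactors : X ∈ commutant (kroneckerHom φ ψ) ↔
      (∀ g, (φ g ⊗ₖ (1 : Matrix n n R)) * X = X * (φ g ⊗ₖ (1 : Matrix n n R))) ∧
        ∀ h, ((1 : Matrix m m R) ⊗ₖ ψ h) * X = X * ((1 : Matrix m m R) ⊗ₖ ψ h) := by
    rw [mem_commutant]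
    refine ⟨fun hX => ⟨fun g => ?_, fun h => ?_⟩, fun ⟨hφ, hψ⟩ ⟨g, h⟩ => ?_⟩
    · simpa [kroneckerHom] using hX (g, 1)
    · simpa [kroneckerHom] using hX (1, h)
    · have hfactor : kroneckerHom φ ψ (g, h) = (φ g ⊗ₖ 1) * (1 ⊗ₖ ψ h) := by
        simp [kroneckerHom, ← mul_kronecker_mul]
      rw [hfactor]
      exact Commute.mul_left (hφ g) (hψ h)
  rw [hfactors]
  simp only [kronecker_one_mul_eq_iff, one_kronecker_mul_eq_iff, mem_commutant]
  exact ⟨fun h => ⟨fun b d g => h.1 g b d, fun a c g => h.2 g a c⟩,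
    fun h => ⟨fun g b d => h.1 b d g, fun g a c => h.2 a c g⟩⟩

lemma commutant_kroneckerHom {φ : G →* Matrix m m R} {ψ : H →* Matrix n n R} {l : m → ι}
    {l' : n → κ} (hφ : commutant φ = (blockScalar R l).range)
    (hψ : commutant ψ = (blockScalar R l').range) :
    commutant (kroneckerHom φ ψ) = (blockScalar R (Prod.map l l')).range := by
  ext X
  rw [mem_commutant_kroneckerHom, mem_range_blockScalar_prodMap, hφ, hψ]

lemma toMatrix'_mul_mem_commutant {φ : G →* Matrix n n R} {P : Matrix n n R}
    (hP : P ∈ commutant φ) {f : (n → R) →ₗ[R] (n → R)}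
    (hf : ∀ g, ∀ x ∈ LinearMap.range P.mulVecLin, f (φ g *ᵥ x) = φ g *ᵥ f x) :
    LinearMap.toMatrix' f * P ∈ commutant φ := by
  refine mem_commutant.2 fun g => toLin'.injective <| LinearMap.ext fun v => ?_
  calc toLin' (φ g * (LinearMap.toMatrix' f * P)) v
    _ = φ g *ᵥ f (P *ᵥ v) := by simp
    _ = f (φ g *ᵥ P *ᵥ v) := (hf g _ ⟨v, rfl⟩).symm
    _ = f (P *ᵥ φ g *ᵥ v) := by rw [mulVec_mulVec, mem_commutant.1 hP g, ← mulVec_mulVec]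
    _ = toLin' (LinearMap.toMatrix' f * P * φ g) v := by simp

lemma apply_eq_zero_of_mapsTo_range_sectorProj [DecidableEq ι]
    {φ : G →* Matrix n n R} {l : n → ι} (hφ : commutant φ = (blockScalar R l).range)
    {w w' : ι} (hw : w ≠ w') {f : (n → R) →ₗ[R] (n → R)}
    (hmaps : ∀ x ∈ LinearMap.range (sectorProj R l w).mulVecLin,
      f x ∈ LinearMap.range (sectorProj R l w').mulVecLin)
    (hf : ∀ g, ∀ x ∈ LinearMap.range (sectorProj R l w).mulVecLin,
      f (φ g *ᵥ x) = φ g *ᵥ f x)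
    {x : n → R} (hx : x ∈ LinearMap.range (sectorProj R l w).mulVecLin) : f x = 0 := by
  have hP : sectorProj R l w ∈ commutant φ := hφ ▸ ⟨Pi.single w 1, rfl⟩
  obtain ⟨c, hc⟩ := AlgHom.mem_range _ |>.1 (hφ ▸ toMatrix'_mul_mem_commutant hP hf)
  have hfx : f x = c w • x := by
    rw [← blockScalar_mulVec l c hx, hc, ← mulVec_mulVec,
      sectorProj_mulVec_of_mem l hx, LinearMap.toMatrix'_mulVec]
  calc f x = sectorProj R l w' *ᵥ f x := (sectorProj_mulVec_of_mem l (hmaps x hx)).symm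
    _ = 0 := by rw [hfx, mulVec_smul, sectorProj_mulVec_of_mem_of_ne l hw hx, smul_zero]

/-- The representation on column vectors defined by a matrix representation. -/
def mulVecRep (φ : G →* Matrix n n R) : Representation R G (n → R) :=
  (toLinAlgEquiv' : Matrix n n R ≃ₐ[R] _).toMonoidHom.comp φ

lemma mulVecRep_apply (φ : G →* Matrix n n R) (g : G) : mulVecRep φ g = toLin' (φ g) := rfl

lemma mem_commutant_iff_isIntertwiningMap {φ : G →* Matrix n n R} {X : Matrix n n R} :
    X ∈ commutant φ ↔ (mulVecRep φ).IsIntertwiningMap (mulVecRep φ) (toLin' X) := by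
  rw [mem_commutant, Representation.isIntertwiningMap_iff]
  refine forall_congr' fun g => ?_
  rw [← toLin'.injective.eq_iff, toLin'_mul, toLin'_mul, eq_comm, LinearMap.ext_iff]
  rfl

end Commutant

section Representation

variable {R 𝕜 G n ι : Type*} [CommRing R] [Field 𝕜] [Group G] [Fintype n] [DecidableEq n]

lemma map_toLin'_commutant (φ : G →* Matrix n n R) :
    (Subalgebra.toSubmodule (commutant φ)).map (toLin' : Matrix n n R ≃ₗ[R] _).toLinearMap =
      ((mulVecRep φ).linHom (mulVecRep φ)).invariants := by
  ext f
  obtain ⟨X, rfl⟩ := toLin'.surjective f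
  simp [Representation.mem_invariants, mem_commutant_iff_isIntertwiningMap]

lemma finrank_commutant [Fintype G] [NeZero (Nat.card G : 𝕜)] (φ : G →* Matrix n n 𝕜) :
    (Module.finrank 𝕜 (commutant φ) : 𝕜) =
      (Fintype.card G : 𝕜)⁻¹ * ∑ g, trace (φ g⁻¹) * trace (φ g) := by
  have : Invertible (Nat.card G : 𝕜) := invertibleOfNonzero (NeZero.ne _)
  have hchar (g : G) : (mulVecRep φ).character g = trace (φ g) := by
    rw [Representation.character, mulVecRep_apply, trace_toLin'_eq]
  have hfinrank : Module.finrank 𝕜 (commutant φ) =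
      Module.finrank 𝕜 ((mulVecRep φ).linHom (mulVecRep φ)).invariants := by
    rw [← map_toLin'_commutant, LinearEquiv.finrank_map_eq, Subalgebra.finrank_toSubmodule]
  rw [hfinrank, ← Representation.card_inv_mul_sum_char_eq_finrank, Nat.card_eq_fintype_card]
  simp only [Representation.char_linHom, hchar]

lemma exists_mem_commutant_isProj [Finite G] [NeZero (Nat.card G : 𝕜)] {φ : G →* Matrix n n 𝕜}
    {U : Submodule 𝕜 (n → 𝕜)} (hU : ∀ g, U.map (φ g).mulVecLin ≤ U) :
    ∃ X ∈ commutant φ, LinearMap.IsProj U X.mulVecLin := by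
  let σ : Subrepresentation (mulVecRep φ) :=
    ⟨U, fun g _ hv => hU g (Submodule.mem_map_of_mem hv)⟩
  obtain ⟨τ, hστ⟩ := exists_isCompl σ
  have hcompl : IsCompl U τ.toSubmodule :=
    IsCompl.of_eq (by rw [← Subrepresentation.toSubmodule_inf σ τ, hστ.inf_eq_bot]; rfl)
      (by rw [← Subrepresentation.toSubmodule_sup σ τ, hστ.sup_eq_top]; rfl)
  set f := U.projection τ.toSubmodule hcompl
  have hf : IsIdempotentElem f := Submodule.isIdempotentElem_projection hcompl
  have hcomm (g : G) : Commute f (mulVecRep φ g) := by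
    rw [LinearMap.IsIdempotentElem.commute_iff hf, Submodule.range_projection,
      Submodule.ker_projection]
    exact ⟨σ.apply_mem_toSubmodule g, τ.apply_mem_toSubmodule g⟩
  refine ⟨LinearMap.toMatrix' f,
    mem_commutant_iff_isIntertwiningMap.2 ⟨fun g v => ?_⟩, ?_⟩
  · rw [toLin'_toMatrix']
    exact LinearMap.congr_fun (hcomm g).eq v
  · rw [← toLin'_apply', toLin'_toMatrix', ← Submodule.range_projection hcompl]
    exact (LinearMap.isProj_range_iff_isIdempotentElem f).2 hf

lemma commutant_eq_range_blockScalar [CharZero 𝕜] [Fintype G] [Fintype ι]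
    {φ : G →* Matrix n n 𝕜} {l : n → ι} (hl : l.Surjective)
    (hφ : ∀ g i j, l i ≠ l j → φ g i j = 0)
    (hnorm : (Fintype.card G : 𝕜)⁻¹ * ∑ g, trace (φ g⁻¹) * trace (φ g) = Fintype.card ι) :
    commutant φ = (blockScalar 𝕜 l).range := by
  have hfinrank : Module.finrank 𝕜 (commutant φ) = Fintype.card ι := by
    exact_mod_cast (finrank_commutant φ).trans hnorm
  have hfinrank_range : Module.finrank 𝕜 (blockScalar 𝕜 l).range = Fintype.card ι :=
    (LinearMap.finrank_range_of_inj (f := (blockScalar 𝕜 l).toLinearMap)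
      (blockScalar_injective hl)).trans (Module.finrank_fintype_fun_eq_card 𝕜)
  exact (Subalgebra.eq_of_le_of_finrank_eq (range_blockScalar_le_commutant hφ)
    (hfinrank_range.trans hfinrank.symm)).symm

end Representation

section Decomposition

variable {𝕜 G n ι : Type*} [Field 𝕜] [Group G] [Fintype n] [DecidableEq n]

/-- The matrices `P w` are the orthogonal projectors onto the summands of a decomposition of the
matrix representation `ψ` into pairwise inequivalent irreducible subrepresentations. -/
structure IsMultiplicityFreeDecomposition [Fintype ι] (ψ : G →* Matrix n n 𝕜)
    (P : ι → Matrix n n 𝕜) : Prop where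
  completeOrthogonalIdempotents : CompleteOrthogonalIdempotents P
  isSymm : ∀ w, (P w).IsSymm
  commute : ∀ w g, Commute (ψ g) (P w)
  ne_zero : ∀ w, P w ≠ 0
  irreducible : ∀ w (U : Submodule 𝕜 (n → 𝕜)), U ≤ LinearMap.range (P w).mulVecLin →
    (∀ g, U.map (ψ g).mulVecLin ≤ U) → U = ⊥ ∨ U = LinearMap.range (P w).mulVecLin
  inequivalent : ∀ w w', w ≠ w' → ¬∃ f : (n → 𝕜) →ₗ[𝕜] (n → 𝕜),
    Set.InjOn f (LinearMap.range (P w).mulVecLin) ∧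
    f '' LinearMap.range (P w).mulVecLin = LinearMap.range (P w').mulVecLin ∧
    ∀ g, ∀ x ∈ LinearMap.range (P w).mulVecLin, f (ψ g *ᵥ x) = ψ g *ᵥ f x

variable [DecidableEq ι] {ψ : G →* Matrix n n 𝕜} {l : n → ι}

lemma eq_bot_or_eq_range_sectorProj_of_map_le [Finite G] [NeZero (Nat.card G : 𝕜)]
    (hψ : commutant ψ ≤ (blockScalar 𝕜 l).range) {w : ι} {U : Submodule 𝕜 (n → 𝕜)}
    (hUw : U ≤ LinearMap.range (sectorProj 𝕜 l w).mulVecLin)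
    (hU : ∀ g, U.map (ψ g).mulVecLin ≤ U) :
    U = ⊥ ∨ U = LinearMap.range (sectorProj 𝕜 l w).mulVecLin := by
  obtain ⟨X, hX, hproj⟩ := exists_mem_commutant_isProj hU
  obtain ⟨c, rfl⟩ := hψ hX
  refine (eq_or_ne U ⊥).imp_right fun hne => hUw.antisymm fun x hx => ?_
  obtain ⟨u, hu, hu_ne⟩ := U.ne_bot_iff.1 hne
  have hc : c w = 1 := smul_left_injective 𝕜 hu_ne <| by
    simpa [blockScalar_mulVec l c (hUw hu)] using hproj.map_id u hu
  simpa [blockScalar_mulVec l c hx, hc] using hproj.map_mem x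

theorem isMultiplicityFreeDecomposition_sectorProj [Fintype ι] [Finite G]
    [NeZero (Nat.card G : 𝕜)] (hl : l.Surjective)
    (hψ : commutant ψ = (blockScalar 𝕜 l).range) :
    IsMultiplicityFreeDecomposition ψ (sectorProj 𝕜 l) where
  completeOrthogonalIdempotents := completeOrthogonalIdempotents_sectorProj l
  isSymm := isSymm_sectorProj l
  commute w g := mem_commutant.1 (hψ ▸ ⟨Pi.single w 1, rfl⟩) g
  ne_zero := sectorProj_ne_zero hl
  irreducible _ _ := eq_bot_or_eq_range_sectorProj_of_map_le hψ.le
  inequivalent := by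
    rintro w w' hw ⟨f, hinj, himage, hf⟩
    refine sectorProj_ne_zero (R := 𝕜) hl w (toLin'.injective <| LinearMap.ext fun v => ?_)
    have hv : sectorProj 𝕜 l w *ᵥ v ∈ LinearMap.range (sectorProj 𝕜 l w).mulVecLin := ⟨v, rfl⟩
    have hfv := apply_eq_zero_of_mapsTo_range_sectorProj hψ hw
      (fun x hx => himage.subset (Set.mem_image_of_mem f hx)) hf hv
    simpa using hinj hv (zero_mem _) (hfv.trans (map_zero f).symm)

end Decomposition

section FixedPoint

variable {R n : Type*} [CommSemiring R] [Fintype n] [DecidableEq n]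

/-- The label separating a base point `o` from all other indices: on Pauli labels, with `o` the
identity, it is the weight. -/
def pointLabel (o : n) (i : n) : Bool :=
  decide (i ≠ o)

omit [Fintype n] in
lemma pointLabel_surjective [Nontrivial n] (o : n) : (pointLabel o).Surjective := by
  obtain ⟨i, hi⟩ := exists_ne o
  exact Bool.forall_bool.2 ⟨⟨o, by simp [pointLabel]⟩, ⟨i, by simp [pointLabel, hi]⟩⟩

lemma apply_eq_zero_of_pointLabel_ne {M : Matrix n n R} {o : n}
    (hcol : M *ᵥ Pi.single o 1 = Pi.single o 1) (hrow : Pi.single o 1 ᵥ* M = Pi.single o 1)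
    {i j : n} (hij : pointLabel o i ≠ pointLabel o j) : M i j = 0 := by
  obtain rfl | hi := eq_or_ne i o
  · have hj : j ≠ i := fun h => hij (by rw [h])
    simpa [hj] using congrFun hrow j
  · obtain rfl : j = o := by simpa [pointLabel, hi] using hij
    simpa [hi] using congrFun hcol i

end FixedPoint

section Orthogonal

variable {R G n : Type*} [CommRing R] [Group G] [Fintype n] [DecidableEq n]

lemma map_inv_eq_transpose {φ : G →* Matrix n n R} (horth : ∀ g, φ g * (φ g)ᵀ = 1) (g : G) :
    φ g⁻¹ = (φ g)ᵀ :=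
  left_inv_eq_right_inv (by rw [← map_mul, inv_mul_cancel, map_one]) (horth g)

lemma vecMul_eq_self_of_mulVec_eq_self {M : Matrix n n R} (hM : M * Mᵀ = 1) {v : n → R}
    (hv : M *ᵥ v = v) : v ᵥ* M = v := by
  calc v ᵥ* M = Mᵀ *ᵥ (M *ᵥ v) := by rw [hv, mulVec_transpose]
    _ = v := by rw [mulVec_mulVec, mul_eq_one_comm.1 hM, one_mulVec]

end Orthogonal

lemma pauliWeightProj_eq_sectorProj :
    pauliWeightProj = sectorProj ℝ (Prod.map (pointLabel 0) (pointLabel 0)) := by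
  funext ⟨w₁, w₂⟩
  rw [pauliWeightProj, sectorProj, blockScalar_apply]
  congr 1
  funext ⟨i, j⟩
  cases w₁ <;> cases w₂ <;> simp [pointLabel, Pi.single_apply]

lemma commutant_eq_range_blockScalar_pointLabel {𝕜 G n : Type*} [Field 𝕜] [CharZero 𝕜] [Group G]
    [Fintype G] [Fintype n] [DecidableEq n] [Nontrivial n] {φ : G →* Matrix n n 𝕜} {o : n}
    (hcol : ∀ g, φ g *ᵥ Pi.single o 1 = Pi.single o 1)
    (hrow : ∀ g, Pi.single o 1 ᵥ* φ g = Pi.single o 1)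
    (hnorm : (Fintype.card G : 𝕜)⁻¹ * ∑ g, trace (φ g⁻¹) * trace (φ g) = 2) :
    commutant φ = (blockScalar 𝕜 (pointLabel o)).range :=
  commutant_eq_range_blockScalar (pointLabel_surjective o)
    (fun g _ _ => apply_eq_zero_of_pointLabel_ne (hcol g) (hrow g)) (by simpa using hnorm)

theorem stmt_15_general {𝕜 G₁ G₂ n₁ n₂ : Type*} [Field 𝕜] [CharZero 𝕜] [Group G₁] [Fintype G₁]
    [Group G₂] [Fintype G₂] [Fintype n₁] [DecidableEq n₁] [Nontrivial n₁] [Fintype n₂]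
    [DecidableEq n₂] [Nontrivial n₂] (φ₁ : G₁ →* Matrix n₁ n₁ 𝕜) (φ₂ : G₂ →* Matrix n₂ n₂ 𝕜)
    (o₁ : n₁) (o₂ : n₂)
    (hcol₁ : ∀ g, φ₁ g *ᵥ Pi.single o₁ 1 = Pi.single o₁ 1)
    (hrow₁ : ∀ g, Pi.single o₁ 1 ᵥ* φ₁ g = Pi.single o₁ 1)
    (hnorm₁ : (Fintype.card G₁ : 𝕜)⁻¹ * ∑ g, trace (φ₁ g⁻¹) * trace (φ₁ g) = 2)
    (hcol₂ : ∀ g, φ₂ g *ᵥ Pi.single o₂ 1 = Pi.single o₂ 1)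
    (hrow₂ : ∀ g, Pi.single o₂ 1 ᵥ* φ₂ g = Pi.single o₂ 1)
    (hnorm₂ : (Fintype.card G₂ : 𝕜)⁻¹ * ∑ g, trace (φ₂ g⁻¹) * trace (φ₂ g) = 2) :
    IsMultiplicityFreeDecomposition (kroneckerHom φ₁ φ₂)
      (sectorProj 𝕜 (Prod.map (pointLabel o₁) (pointLabel o₂))) :=
  isMultiplicityFreeDecomposition_sectorProj
    ((pointLabel_surjective o₁).prodMap (pointLabel_surjective o₂))
    (commutant_kroneckerHom (commutant_eq_range_blockScalar_pointLabel hcol₁ hrow₁ hnorm₁)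
      (commutant_eq_range_blockScalar_pointLabel hcol₂ hrow₂ hnorm₂))

/-- Let `φ` be the 4-dimensional PTM representation of the single-qubit
Clifford group (abstractly: any finite group `G` with an orthogonal representation `φ`
fixing the identity-Pauli direction `e₀` and satisfying the unitary-2-design property
`𝔼_g (tr φ g)² = 2`).  Then the PTM representation `ψ (g,h) = φ g ⊗ φ h` of the
two-fold tensor product of the single-qubit Clifford group on two qubits decomposes into
exactly the four subrepresentations projected onto by `P_w`, `w ∈ {0,1}²`: the `P_w` are
orthogonal projectors summing to the identity, invariant under `ψ`, each carrying an
irreducible subrepresentation, and the four subrepresentations are pairwise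
inequivalent. -/
theorem stmt_15 {G : Type*} [Group G] [Fintype G]
    (φ : G →* Matrix (Fin 4) (Fin 4) ℝ)
    (horth : ∀ g, φ g * (φ g)ᵀ = 1)
    (hfix : ∀ g, (φ g).mulVec (Pi.single 0 1) = Pi.single 0 1)
    (hdesign : (Fintype.card G : ℝ)⁻¹ * ∑ g : G, (Matrix.trace (φ g)) ^ 2 = 2) :
    (∑ w : Bool × Bool, pauliWeightProj w = 1) ∧
    (∀ w, pauliWeightProj w * pauliWeightProj w = pauliWeightProj w) ∧
    (∀ w, (pauliWeightProj w)ᵀ = pauliWeightProj w) ∧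
    (∀ w w', w ≠ w' → pauliWeightProj w * pauliWeightProj w' = 0) ∧
    (∀ w (p : G × G), (φ p.1 ⊗ₖ φ p.2) * pauliWeightProj w =
      pauliWeightProj w * (φ p.1 ⊗ₖ φ p.2)) ∧
    (∀ w (U : Submodule ℝ (Fin 4 × Fin 4 → ℝ)),
      U ≤ LinearMap.range (pauliWeightProj w).mulVecLin →
      (∀ p : G × G, U.map ((φ p.1 ⊗ₖ φ p.2)).mulVecLin ≤ U) →
      U = ⊥ ∨ U = LinearMap.range (pauliWeightProj w).mulVecLin) ∧
    (∀ w w', w ≠ w' →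
      ¬∃ f : (Fin 4 × Fin 4 → ℝ) →ₗ[ℝ] (Fin 4 × Fin 4 → ℝ),
        Set.InjOn f (LinearMap.range (pauliWeightProj w).mulVecLin) ∧
        f '' (LinearMap.range (pauliWeightProj w).mulVecLin) =
          (LinearMap.range (pauliWeightProj w').mulVecLin : Set (Fin 4 × Fin 4 → ℝ)) ∧
        ∀ (p : G × G), ∀ x ∈ LinearMap.range (pauliWeightProj w).mulVecLin,
          f ((φ p.1 ⊗ₖ φ p.2).mulVec x) = (φ p.1 ⊗ₖ φ p.2).mulVec (f x)) := by
  have hrow (g : G) : Pi.single 0 1 ᵥ* φ g = Pi.single 0 1 :=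
    vecMul_eq_self_of_mulVec_eq_self (horth g) (hfix g)
  have hnorm : (Fintype.card G : ℝ)⁻¹ * ∑ g, trace (φ g⁻¹) * trace (φ g) = 2 := by
    simpa only [map_inv_eq_transpose horth, trace_transpose, ← sq] using hdesign
  have hdecomp : IsMultiplicityFreeDecomposition (kroneckerHom φ φ) pauliWeightProj :=
    pauliWeightProj_eq_sectorProj ▸ stmt_15_general φ φ 0 0 hfix hrow hnorm hfix hrow hnorm
  exact ⟨hdecomp.completeOrthogonalIdempotents.complete,
    hdecomp.completeOrthogonalIdempotents.idem, hdecomp.isSymm,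
    fun _ _ hw => hdecomp.completeOrthogonalIdempotents.ortho hw, hdecomp.commute,
    hdecomp.irreducible, hdecomp.inequivalent⟩
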